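/- Let n ≥ 2 be an integer, let γ ⊆ {1,…,n} have cardinality k with 1 ≤ k ≤ n−1, and let 0 < σ²_min < σ²_max. Define R = {c ∈ ℝⁿ : σ²_min ≤ S_γ(c)/k ≤ σ²_max and σ²_min ≤ (S(c) − S_γ(c))/(n−k) ≤ σ²_max}. Then the parametric complexity, i.e., the integral over R of the maximized likelihood c ↦ Π_{i∈γ} φ(c_i; 0, S_γ(c)/k) · Π_{i∉γ} φ(c_i; 0, (S(c) − S_γ(c))/(n−k)), equals C = k^{k/2} (n−k)^{(n−k)/2} / ((2e)^{n/2} Γ(k/2) Γ((n−k)/2)) · (ln(σ²_max/σ²_min))². -/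

import Mathlib

open MeasureTheory Real Finset

/-- `Sg γ c = ∑_{i ∈ γ} c_i²`. -/
noncomputable def Sg {n : ℕ} (γ : Finset (Fin n)) (c : Fin n → ℝ) : ℝ :=
  ∑ i ∈ γ, (c i) ^ 2

/-- `Stot c = ∑_{i=1}^n c_i²`. -/
noncomputable def Stot {n : ℕ} (c : Fin n → ℝ) : ℝ :=
  ∑ i, (c i) ^ 2

/-- Centered Gaussian density `φ(x; 0, σ²) = (2πσ²)^{-1/2} exp(-x²/(2σ²))`. -/
noncomputable def gauss (x σ2 : ℝ) : ℝ :=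
  (2 * Real.pi * σ2) ^ (-(1 : ℝ) / 2) * Real.exp (-(x ^ 2) / (2 * σ2))

/-- The maximized likelihood of one block, as a function of the sum of squares `s`. -/
noncomputable def blockF (d a b s : ℝ) : ℝ :=
  if a ≤ s / d ∧ s / d ≤ b then (2 * Real.pi * (s / d)) ^ (-d / 2) * Real.exp (-d / 2) else 0

lemma prod_gauss {ι : Type*} (s : Finset ι) (c : ι → ℝ) (v : ℝ) (hv : 0 < v)
    (h : ∑ i ∈ s, (c i) ^ 2 = (s.card : ℝ) * v) :
    ∏ i ∈ s, gauss (c i) v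
      = (2 * Real.pi * v) ^ (-(s.card : ℝ) / 2) * Real.exp (-(s.card : ℝ) / 2) := by
  unfold gauss
  have hp : 0 < 2 * Real.pi * v := by positivity
  rw [Finset.prod_mul_distrib, Finset.prod_const, ← Real.exp_sum, ← Finset.sum_div,
    Finset.sum_neg_distrib, h, ← Real.rpow_natCast, ← Real.rpow_mul hp.le]
  congr 2
  · ring
  · field_simp

lemma radial (d : ℕ) (hd : 0 < d) (a b : ℝ) (ha : 0 < a) (hab : a < b) :
    ∫ y in Set.Ioi (0 : ℝ), y ^ (d - 1) • blockF d a b (y ^ 2)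
      = (2 * Real.pi * Real.exp 1 / d) ^ (-(d : ℝ) / 2) * (Real.log (b / a) / 2) := by
  have hd' : (0 : ℝ) < d := by exact_mod_cast hd
  have hb : 0 < b := ha.trans hab
  have hle : √(d * a) ≤ √(d * b) := Real.sqrt_le_sqrt (by gcongr)
  have hpa : 0 < √(d * a) := Real.sqrt_pos.2 (by positivity)
  have hpb : 0 < √(d * b) := Real.sqrt_pos.2 (by positivity)
  have key : ∀ y ∈ Set.Ioi (0 : ℝ), y ^ (d - 1) • blockF d a b (y ^ 2)
      = (Set.Icc √(d * a) √(d * b)).indicator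
        (fun y => (2 * Real.pi * Real.exp 1 / d) ^ (-(d : ℝ) / 2) * y⁻¹) y := by
    intro y hy
    have hy : 0 < y := hy
    have hiff : (a ≤ y ^ 2 / d ∧ y ^ 2 / d ≤ b) ↔ y ∈ Set.Icc √(d * a) √(d * b) := by
      rw [Set.mem_Icc, Real.sqrt_le_left hy.le, Real.le_sqrt hy.le, le_div_iff₀ hd',
        div_le_iff₀ hd', mul_comm a, mul_comm b]
      positivity
    unfold blockF
    by_cases h : y ∈ Set.Icc √(d * a) √(d * b)
    · rw [if_pos (hiff.2 h), Set.indicator_of_mem h]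
      have e1 : Real.exp (-(d : ℝ) / 2) = (Real.exp 1) ^ (-(d : ℝ) / 2) := by
        rw [Real.exp_one_rpow]
      have e2 : (2 * Real.pi * (y ^ 2 / d)) ^ (-(d : ℝ) / 2) * (Real.exp 1) ^ (-(d : ℝ) / 2)
          = (2 * Real.pi * Real.exp 1 / d) ^ (-(d : ℝ) / 2) * (y ^ 2) ^ (-(d : ℝ) / 2) := by
        rw [← Real.mul_rpow (by positivity) (by positivity),
          ← Real.mul_rpow (by positivity) (by positivity)]
        congr 1
        ring
      have e3 : (y ^ 2) ^ (-(d : ℝ) / 2) = (y ^ d)⁻¹ := by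
        rw [← Real.rpow_natCast y 2, ← Real.rpow_mul hy.le, ← Real.rpow_natCast y d,
          ← Real.rpow_neg hy.le]
        congr 1
        push_cast
        ring
      have e4 : y ^ d = y ^ (d - 1) * y := by
        rw [← pow_succ]; congr 1; omega
      rw [e1, e2, e3, e4, smul_eq_mul]
      field_simp
    · rw [if_neg (fun h' => h (hiff.1 h')), Set.indicator_of_notMem h, smul_zero]
  have hsub : Set.Ioi (0 : ℝ) ∩ Set.Icc √(d * a) √(d * b) = Set.Icc √(d * a) √(d * b) :=
    Set.inter_eq_right.2 (fun y hy => lt_of_lt_of_le hpa hy.1)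
  rw [setIntegral_congr_fun measurableSet_Ioi key, setIntegral_indicator measurableSet_Icc,
    hsub, integral_Icc_eq_integral_Ioc,
    ← intervalIntegral.integral_of_le hle, intervalIntegral.integral_const_mul,
    integral_inv_of_pos hpa hpb, ← Real.sqrt_div (by positivity), Real.log_sqrt (by positivity)]
  congr 3
  field_simp

lemma block (ι : Type*) [Fintype ι] [Nonempty ι] (d : ℕ) (hd : Fintype.card ι = d) (a b : ℝ)
    (ha : 0 < a) (hab : a < b) :
    ∫ x : ι → ℝ, blockF d a b (∑ i, x i ^ 2)
      = (d : ℝ) ^ ((d : ℝ) / 2) / ((2 * Real.exp 1) ^ ((d : ℝ) / 2) * Real.Gamma ((d : ℝ) / 2))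
        * Real.log (b / a) := by
  have hd0 : 0 < d := hd ▸ Fintype.card_pos
  have hd' : (0 : ℝ) < d := by exact_mod_cast hd0
  have h1 : ∫ x : ι → ℝ, blockF d a b (∑ i, x i ^ 2)
      = ∫ x : EuclideanSpace ℝ ι, blockF d a b (‖x‖ ^ 2) := by
    rw [← (EuclideanSpace.volume_preserving_symm_measurableEquiv_toLp ι).integral_comp'
      (fun x : ι → ℝ => blockF d a b (∑ i, x i ^ 2))]
    congr 1
    ext x
    rw [EuclideanSpace.real_norm_sq_eq]
    rfl
  have hG : 0 < Real.Gamma ((d : ℝ) / 2) := Real.Gamma_pos_of_pos (by positivity)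
  rw [h1, integral_fun_norm_addHaar volume (fun y => blockF d a b (y ^ 2)),
    finrank_euclideanSpace, hd, radial d hd0 a b ha hab, Measure.real, EuclideanSpace.volume_ball,
    hd, Real.Gamma_add_one (by positivity)]
  have hs : √Real.pi ^ d = Real.pi ^ ((d : ℝ) / 2) := by
    rw [Real.sqrt_eq_rpow, ← Real.rpow_natCast, ← Real.rpow_mul Real.pi_pos.le]
    congr 1
    ring
  rw [hs]
  have hK : (2 * Real.pi * Real.exp 1 / d) ^ (-(d : ℝ) / 2)
      = (d : ℝ) ^ ((d : ℝ) / 2) / (Real.pi ^ ((d : ℝ) / 2) * (2 * Real.exp 1) ^ ((d : ℝ) / 2)) := by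
    rw [neg_div, Real.rpow_neg (by positivity), Real.div_rpow (by positivity) (by positivity),
      inv_div, ← Real.mul_rpow (by positivity) (by positivity)]
    congr 2
    ring
  rw [hK, ENNReal.ofReal_one, one_pow, one_mul, ENNReal.toReal_ofReal (by positivity)]
  have p1 : 0 < Real.pi ^ ((d : ℝ) / 2) := by positivity
  have p2 : 0 < (2 * Real.exp 1) ^ ((d : ℝ) / 2) := by positivity
  simp only [nsmul_eq_mul, smul_eq_mul]
  generalize Real.pi ^ ((d : ℝ) / 2) = A at *
  generalize (2 * Real.exp 1) ^ ((d : ℝ) / 2) = B at *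
  generalize (d : ℝ) ^ ((d : ℝ) / 2) = C at *
  field_simp

lemma split_blocks {N : ℕ} (p : Fin N → Prop) [DecidablePred p] (k m : ℕ)
    (hc1 : Fintype.card {i // p i} = k) (hc2 : Fintype.card {i // ¬ p i} = m)
    (hk : 0 < k) (hm : 0 < m) (a b : ℝ) (ha : 0 < a) (hab : a < b) :
    ∫ c : Fin N → ℝ, blockF k a b (∑ i : {i // p i}, c i ^ 2)
        * blockF m a b (∑ i : {i // ¬ p i}, c i ^ 2)
      = ((k : ℝ) ^ ((k : ℝ) / 2) / ((2 * Real.exp 1) ^ ((k : ℝ) / 2) * Real.Gamma ((k : ℝ) / 2))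
        * Real.log (b / a)) *
        ((m : ℝ) ^ ((m : ℝ) / 2) / ((2 * Real.exp 1) ^ ((m : ℝ) / 2) * Real.Gamma ((m : ℝ) / 2))
        * Real.log (b / a)) := by
  have : Nonempty {i // p i} := Fintype.card_pos_iff.1 (by omega)
  have : Nonempty {i // ¬ p i} := Fintype.card_pos_iff.1 (by omega)
  have hp := (volume_preserving_piEquivPiSubtypeProd (fun _ : Fin N => ℝ) p).integral_comp'
    (fun z : ({i // p i} → ℝ) × ({i // ¬ p i} → ℝ) =>
      blockF k a b (∑ i, z.1 i ^ 2) * blockF m a b (∑ i, z.2 i ^ 2))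
  refine Eq.trans hp ?_
  refine (integral_prod_mul (μ := volume) (ν := volume)
    (fun x : {i // p i} → ℝ => blockF k a b (∑ i, x i ^ 2))
    (fun y : {i // ¬ p i} → ℝ => blockF m a b (∑ i, y i ^ 2))).trans ?_
  rw [block _ k hc1 _ _ ha hab, block _ m hc2 _ _ ha hab]

theorem stmt_8 (n k : ℕ) (hn : 2 ≤ n) (γ : Finset (Fin n)) (hγ : γ.card = k)
    (hk1 : 1 ≤ k) (hk2 : k ≤ n - 1) (σmin σmax : ℝ) (h0 : 0 < σmin) (hσ : σmin < σmax) :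
    ∫ c in {c : Fin n → ℝ |
        σmin ≤ Sg γ c / k ∧ Sg γ c / k ≤ σmax ∧
        σmin ≤ (Stot c - Sg γ c) / ((n : ℝ) - k) ∧
        (Stot c - Sg γ c) / ((n : ℝ) - k) ≤ σmax},
      ((∏ i ∈ γ, gauss (c i) (Sg γ c / k)) *
        ∏ i ∈ γᶜ, gauss (c i) ((Stot c - Sg γ c) / ((n : ℝ) - k)))
    = (k : ℝ) ^ ((k : ℝ) / 2) * ((n : ℝ) - k) ^ (((n : ℝ) - k) / 2) /
        ((2 * Real.exp 1) ^ ((n : ℝ) / 2) *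
          Real.Gamma ((k : ℝ) / 2) * Real.Gamma (((n : ℝ) - k) / 2)) *
        (Real.log (σmax / σmin)) ^ 2 := by
  obtain ⟨m, rfl⟩ : ∃ m, n = k + m := ⟨n - k, by omega⟩
  have hm : 0 < m := by omega
  have hnk : ((k + m : ℕ) : ℝ) - k = (m : ℝ) := by push_cast; ring
  rw [hnk]
  have hk' : (0 : ℝ) < k := by exact_mod_cast hk1
  have hm' : (0 : ℝ) < m := by exact_mod_cast hm
  have hγc : γᶜ.card = m := by rw [Finset.card_compl, Fintype.card_fin, hγ]; omega
  have hS : ∀ c : Fin (k + m) → ℝ, Stot c - Sg γ c = ∑ i ∈ γᶜ, c i ^ 2 := by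
    intro c
    unfold Stot Sg
    rw [← Finset.sum_add_sum_compl γ]
    ring
  have hmeasS : ∀ s : Finset (Fin (k + m)),
      Measurable (fun c : Fin (k + m) → ℝ => ∑ i ∈ s, c i ^ 2) := by
    intro s
    fun_prop
  simp only [hS]
  unfold Sg
  have hc1 : Fintype.card {i // i ∈ γ} = k := by simp [hγ]
  have hc2 : Fintype.card {i // ¬ i ∈ γ} = m := by
    exact (Fintype.card_of_subtype γᶜ (by simp)).trans hγc
  have : Nonempty {i // i ∈ γ} := Fintype.card_pos_iff.1 (by omega)
  have : Nonempty {i // ¬ i ∈ γ} := Fintype.card_pos_iff.1 (by omega)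
  rw [← integral_indicator (by
    have h1 := (hmeasS γ).div_const (k : ℝ)
    have h2 := (hmeasS γᶜ).div_const (m : ℝ)
    exact (measurableSet_le measurable_const h1).inter ((measurableSet_le h1 measurable_const).inter
      ((measurableSet_le measurable_const h2).inter (measurableSet_le h2 measurable_const))))]
  have key : ∀ c : Fin (k + m) → ℝ, ({c : Fin (k + m) → ℝ |
        σmin ≤ (∑ i ∈ γ, c i ^ 2) / (k : ℝ) ∧ (∑ i ∈ γ, c i ^ 2) / (k : ℝ) ≤ σmax ∧
        σmin ≤ (∑ i ∈ γᶜ, c i ^ 2) / (m : ℝ) ∧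
        (∑ i ∈ γᶜ, c i ^ 2) / (m : ℝ) ≤ σmax}).indicator
      (fun c => (∏ i ∈ γ, gauss (c i) ((∑ i ∈ γ, c i ^ 2) / (k : ℝ))) *
        ∏ i ∈ γᶜ, gauss (c i) ((∑ i ∈ γᶜ, c i ^ 2) / (m : ℝ))) c
      = blockF k σmin σmax (∑ i : {i // i ∈ γ}, c i ^ 2)
        * blockF m σmin σmax (∑ i : {i // ¬ i ∈ γ}, c i ^ 2) := by
    intro c
    have s1 : ∑ i : {i // i ∈ γ}, c i ^ 2 = ∑ i ∈ γ, c i ^ 2 :=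
      (Finset.sum_subtype γ (by simp) (fun i => c i ^ 2)).symm
    have s2 : ∑ i : {i // ¬ i ∈ γ}, c i ^ 2 = ∑ i ∈ γᶜ, c i ^ 2 :=
      (Finset.sum_subtype γᶜ (by simp) (fun i => c i ^ 2)).symm
    rw [s1, s2, Set.indicator_apply]
    unfold blockF
    by_cases hA : σmin ≤ (∑ i ∈ γ, c i ^ 2) / (k : ℝ) ∧ (∑ i ∈ γ, c i ^ 2) / (k : ℝ) ≤ σmax
    · by_cases hB : σmin ≤ (∑ i ∈ γᶜ, c i ^ 2) / (m : ℝ) ∧ (∑ i ∈ γᶜ, c i ^ 2) / (m : ℝ) ≤ σmax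
      · rw [if_pos hA, if_pos hB, if_pos ⟨hA.1, hA.2, hB.1, hB.2⟩,
          prod_gauss γ c _ (h0.trans_le hA.1) (by rw [hγ]; field_simp),
          prod_gauss γᶜ c _ (h0.trans_le hB.1) (by rw [hγc]; field_simp), hγ, hγc]
      · rw [if_neg hB, if_neg (fun h => hB ⟨h.2.2.1, h.2.2.2⟩), mul_zero]
    · rw [if_neg hA, if_neg (fun h => hA ⟨h.1, h.2.1⟩), zero_mul]
  simp only [key]
  have hp := split_blocks (fun i => i ∈ γ) k m (by convert hc1) (by convert hc2)
    hk1 hm σmin σmax h0 hσ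
  have he : (2 * Real.exp 1) ^ (((k + m : ℕ) : ℝ) / 2)
      = (2 * Real.exp 1) ^ ((k : ℝ) / 2) * (2 * Real.exp 1) ^ ((m : ℝ) / 2) := by
    rw [← Real.rpow_add (by positivity)]
    congr 1
    push_cast
    ring
  rw [he]
  have hR : ∀ A B C D E F L : ℝ, A * B / (C * D * E * F) * L ^ 2
      = (A / (C * E) * L) * (B / (D * F) * L) := by
    intros
    ring
  rw [hR]
  convert hp
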